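/- arXiv:0806.0836 — 2 statements merged into one kernel-verified Lean document; each statement's English description precedes it below -/
import Mathlib

section
/- Let Γ and Γ' be finite connected loopless multigraphs, each with at least one edge, let w be a weight on Γ, and let φ : Γ → Γ' be a w-harmonic morphism. Then φ is surjective on vertices and surjective on edges. -/
open Finset

/-- A finite loopless connected multigraph: vertices `V`, edges `E`, each edge incident
to an unordered pair of distinct vertices. -/
structure Multigraph (V E : Type) [Fintype V] [Fintype E] where
  inc : E → Sym2 V
  loopless : ∀ e, ¬ (inc e).IsDiag
  connected : (SimpleGraph.fromRel fun u v => ∃ e, inc e = s(u, v)).Connected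

variable {V E V' E' : Type} [Fintype V] [Fintype E] [Fintype V'] [Fintype E']
  [DecidableEq V] [DecidableEq E] [DecidableEq V'] [DecidableEq E']

/-- The degree of a vertex: the number of edges incident to it. -/
def Multigraph.deg (G : Multigraph V E) (v : V) : ℤ :=
  ((univ.filter fun e => v ∈ G.inc e).card : ℤ)

/-- The first Betti number `#E - #V + 1` of a connected graph. -/
def Multigraph.b1 (G : Multigraph V E) : ℤ :=
  (Fintype.card E : ℤ) - (Fintype.card V : ℤ) + 1

/-- The canonical divisor `K_Γ(v) = deg v - 2`. -/
def Multigraph.K (G : Multigraph V E) : V → ℤ := fun v => G.deg v - 2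

/-- A morphism of multigraphs: maps on vertices and edges compatible with incidence. -/
structure GraphHom (G : Multigraph V E) (G' : Multigraph V' E') where
  vmap : V → V'
  emap : E → E'
  compat : ∀ e : E, Sym2.map vmap (G.inc e) = G'.inc (emap e)

/-- `localDeg G G' φ w v e'` is `Σ_{e incident to v, φ(e) = e'} w(e)`. -/
def localDeg (G : Multigraph V E) (G' : Multigraph V' E') (φ : GraphHom G G')
    (w : E → ℤ) (v : V) (e' : E') : ℤ :=
  ∑ e ∈ univ.filter (fun e => v ∈ G.inc e ∧ φ.emap e = e'), w e

/-!
Every vertex `v` of `Γ` lies on an edge, so the common value `m_φ(v)` is a nonempty sum of positive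
weights, hence positive. Therefore every edge of `Γ'` at `φ(v)` is the image of an edge at `v`. The
image of `φ` is thus a nonempty set of vertices of `Γ'` that contains both ends of each edge it
meets, and `Γ'` is connected.
-/

namespace Multigraph

omit [DecidableEq V] [DecidableEq E]

/-- The simple graph underlying a multigraph, obtained by forgetting edge multiplicities. It
carries the connectivity assumption in `Multigraph`. -/
def toSimpleGraph (G : Multigraph V E) : SimpleGraph V :=
  SimpleGraph.fromRel fun u v => ∃ e, G.inc e = s(u, v)

theorem toSimpleGraph_adj {G : Multigraph V E} {u v : V} :
    G.toSimpleGraph.Adj u v ↔ ∃ e, G.inc e = s(u, v) := by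
  simp only [toSimpleGraph, SimpleGraph.fromRel_adj, Sym2.eq_swap (a := v), or_self,
    and_iff_right_iff_imp]
  rintro ⟨e, he⟩ rfl
  exact G.loopless e (he ▸ Sym2.mk_isDiag_iff.mpr rfl)

theorem nontrivial_of_nonempty_edges (G : Multigraph V E) [Nonempty E] : Nontrivial V := by
  obtain ⟨e⟩ := ‹Nonempty E›
  obtain ⟨u, v, he⟩ : ∃ u v, G.inc e = s(u, v) := Sym2.exists.mp ⟨_, rfl⟩
  exact ⟨u, v, (toSimpleGraph_adj.mpr ⟨e, he⟩).ne⟩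

theorem exists_mem_inc (G : Multigraph V E) [Nonempty E] (v : V) : ∃ e, v ∈ G.inc e := by
  have := G.nontrivial_of_nonempty_edges
  obtain ⟨u, huv⟩ : ∃ u, G.toSimpleGraph.Adj v u :=
    G.connected.preconnected.exists_adj_of_nontrivial v
  obtain ⟨e, he⟩ := toSimpleGraph_adj.mp huv
  exact ⟨e, he ▸ Sym2.mem_mk_left v u⟩

theorem eq_univ_of_nonempty_of_inc_closed (G : Multigraph V E) {S : Set V} (hS : S.Nonempty)
    (hclosed : ∀ e, ∀ u ∈ G.inc e, ∀ v ∈ G.inc e, u ∈ S → v ∈ S) : S = Set.univ := by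
  obtain ⟨u, hu⟩ := hS
  refine Set.eq_univ_of_forall fun v => ?_
  have hreach : Relation.ReflTransGen G.toSimpleGraph.Adj u v :=
    (SimpleGraph.reachable_iff_reflTransGen u v).mp (G.connected.preconnected u v)
  induction hreach with
  | refl => exact hu
  | @tail a b _ hab ha =>
    obtain ⟨e, he⟩ := toSimpleGraph_adj.mp hab
    exact hclosed e a (he ▸ Sym2.mem_mk_left a b) b (he ▸ Sym2.mem_mk_right a b) ha

end Multigraph

namespace GraphHom

variable {G : Multigraph V E} {G' : Multigraph V' E'} {φ : GraphHom G G'} {w : E → ℤ}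

omit [DecidableEq E] [DecidableEq V']

section LocallySurjective

omit [DecidableEq V] [DecidableEq E']

theorem mem_inc_emap_iff {e : E} {v' : V'} :
    v' ∈ G'.inc (φ.emap e) ↔ ∃ v ∈ G.inc e, φ.vmap v = v' := by
  rw [← φ.compat, Sym2.mem_map]

/-- `φ` is locally surjective: each edge at `φ v` lifts to an edge at `v`. Surjectivity of a
harmonic morphism factors through this property. -/
def IsLocallySurjective (φ : GraphHom G G') : Prop :=
  ∀ (v : V) (e' : E'), φ.vmap v ∈ G'.inc e' → ∃ e, v ∈ G.inc e ∧ φ.emap e = e'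

theorem IsLocallySurjective.vmap_surjective (hφ : φ.IsLocallySurjective) :
    Function.Surjective φ.vmap := by
  have := G.connected.nonempty
  refine Set.range_eq_univ.mp
    (G'.eq_univ_of_nonempty_of_inc_closed (Set.range_nonempty φ.vmap) ?_)
  rintro e' _ hu v' hv' ⟨u, rfl⟩
  obtain ⟨e, -, rfl⟩ := hφ u e' hu
  obtain ⟨v, -, hv⟩ := mem_inc_emap_iff.mp hv'
  exact ⟨v, hv⟩

theorem IsLocallySurjective.emap_surjective (hφ : φ.IsLocallySurjective) :
    Function.Surjective φ.emap := by
  intro e'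
  obtain ⟨v, hv⟩ := hφ.vmap_surjective (G'.inc e').out.1
  obtain ⟨e, -, he⟩ := hφ v e' (hv ▸ Sym2.out_fst_mem _)
  exact ⟨e, he⟩

end LocallySurjective

theorem localDeg_pos_iff (hw : ∀ e, 0 < w e) {v : V} {e' : E'} :
    0 < localDeg G G' φ w v e' ↔ ∃ e, v ∈ G.inc e ∧ φ.emap e = e' := by
  rw [localDeg, sum_pos_iff_of_nonneg fun e _ => (hw e).le]
  simp [hw]

/-- `φ` is `w`-harmonic: at each vertex `v`, the local degree is the same over all edges at `φ v`.
That common value is the multiplicity `m_φ(v)`. -/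
def IsHarmonic (φ : GraphHom G G') (w : E → ℤ) : Prop :=
  ∀ (v : V) (e₁ e₂ : E'), φ.vmap v ∈ G'.inc e₁ → φ.vmap v ∈ G'.inc e₂ →
    localDeg G G' φ w v e₁ = localDeg G G' φ w v e₂

theorem IsHarmonic.isLocallySurjective [Nonempty E] (hφ : φ.IsHarmonic w) (hw : ∀ e, 0 < w e) :
    φ.IsLocallySurjective := by
  intro v e' hv
  obtain ⟨e, he⟩ := G.exists_mem_inc v
  rw [← localDeg_pos_iff hw]
  calc
    0 < localDeg G G' φ w v (φ.emap e) := (localDeg_pos_iff hw).mpr ⟨e, he, rfl⟩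
    _ = localDeg G G' φ w v e' := hφ v _ _ (mem_inc_emap_iff.mpr ⟨v, he, rfl⟩) hv

end GraphHom

/-- A `w`-harmonic morphism `φ : Γ → Γ'` of finite connected loopless
multigraphs, each with at least one edge, is surjective on vertices and on edges. -/
theorem harmonic_morphism_surjective
    (G : Multigraph V E) (G' : Multigraph V' E') (φ : GraphHom G G')
    (w : E → ℤ) (hw : ∀ e, 0 < w e)
    (hharm : ∀ (v : V) (e₁ e₂ : E'), φ.vmap v ∈ G'.inc e₁ → φ.vmap v ∈ G'.inc e₂ →
      localDeg G G' φ w v e₁ = localDeg G G' φ w v e₂)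
    (hE : Nonempty E) (hE' : Nonempty E') :
    Function.Surjective φ.vmap ∧ Function.Surjective φ.emap := by
  have hlift : φ.IsLocallySurjective := GraphHom.IsHarmonic.isLocallySurjective hharm hw
  exact ⟨hlift.vmap_surjective, hlift.emap_surjective⟩
end

section
/- Let Γ and Γ' be finite connected loopless multigraphs, each with at least one edge, let w be a weight on Γ, and let φ : Γ → Γ' be a w-harmonic morphism. Then the degree of the ramification divisor R_φ = K_Γ − φ*K_{Γ'} is an even integer. -/
open Finset

variable {V E V' E' : Type} [Fintype V] [Fintype E] [Fintype V'] [Fintype E']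
  [DecidableEq V] [DecidableEq E] [DecidableEq V'] [DecidableEq E']

/-!
Every edge has exactly two endpoints, so summing an edge function over all incidences gives twice
its total. For the constant function `1` this makes the degree of `K_Γ` even. For the weight `w`,
harmonicity says that the edges at `v` have total weight `m v * deg (φ v)`, so the sum of these
products over `v` is twice the total weight, and the degree of `φ*K_{Γ'}` is even as well.
-/

section

omit [DecidableEq E]

namespace Multigraph

theorem card_filter_mem_inc (G : Multigraph V E) (e : E) : #{v | v ∈ G.inc e} = 2 := by
  have endpoints_eq : ({v | v ∈ G.inc e} : Finset V) = (G.inc e).toFinset := by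
    ext v
    simp
  rw [endpoints_eq, Sym2.card_toFinset_of_not_isDiag _ (G.loopless e)]

theorem sum_sum_incident {M : Type*} [AddCommMonoid M] (G : Multigraph V E) (f : E → M) :
    ∑ v, ∑ e with v ∈ G.inc e, f e = 2 • ∑ e, f e :=
  calc ∑ v, ∑ e with v ∈ G.inc e, f e
      = ∑ e, ∑ v with v ∈ G.inc e, f e := sum_comm' (by simp)
    _ = ∑ e, 2 • f e := by simp only [sum_const, card_filter_mem_inc]
    _ = 2 • ∑ e, f e := sum_nsmul _ _ _

theorem sum_deg (G : Multigraph V E) : ∑ v, G.deg v = 2 * Fintype.card E := by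
  simpa [deg] using G.sum_sum_incident (fun _ => (1 : ℤ))

theorem sum_K (G : Multigraph V E) : ∑ v, G.K v = 2 * (G.b1 - 1) := by
  simp only [K, b1, sum_sub_distrib, sum_deg, sum_const, card_univ, nsmul_eq_mul]
  ring

end Multigraph

namespace GraphHom

variable {G : Multigraph V E} {G' : Multigraph V' E'} {w : E → ℤ} {m : V → ℤ}

/-- `φ` is `w`-harmonic with multiplicity function `m`. At a vertex whose image has no incident
edge the value of `m` is unconstrained. -/
def IsHarmonicWith (φ : GraphHom G G') (w : E → ℤ) (m : V → ℤ) : Prop :=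
  ∀ v e', φ.vmap v ∈ G'.inc e' → localDeg G G' φ w v e' = m v

omit [DecidableEq V] [DecidableEq V'] [DecidableEq E'] in
theorem vmap_mem_inc_emap (φ : GraphHom G G') {v : V} {e : E} (hv : v ∈ G.inc e) :
    φ.vmap v ∈ G'.inc (φ.emap e) :=
  φ.compat e ▸ Sym2.mem_map.2 ⟨v, hv, rfl⟩

theorem sum_localDeg (φ : GraphHom G G') (w : E → ℤ) (v : V) :
    ∑ e' with φ.vmap v ∈ G'.inc e', localDeg G G' φ w v e' = ∑ e with v ∈ G.inc e, w e := by
  simp only [localDeg, ← filter_filter]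
  exact sum_fiberwise_of_maps_to (by simpa using fun _ => φ.vmap_mem_inc_emap) w

variable {φ : GraphHom G G'}

theorem IsHarmonicWith.mul_deg (hφ : φ.IsHarmonicWith w m) (v : V) :
    m v * G'.deg (φ.vmap v) = ∑ e with v ∈ G.inc e, w e :=
  calc m v * G'.deg (φ.vmap v)
      = ∑ e' with φ.vmap v ∈ G'.inc e', m v := by
        rw [sum_const, nsmul_eq_mul, mul_comm, Multigraph.deg]
    _ = ∑ e' with φ.vmap v ∈ G'.inc e', localDeg G G' φ w v e' :=
        sum_congr rfl fun e' he' => (hφ v e' (mem_filter.1 he').2).symm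
    _ = ∑ e with v ∈ G.inc e, w e := φ.sum_localDeg w v

theorem IsHarmonicWith.sum_mul_K (hφ : φ.IsHarmonicWith w m) :
    ∑ v, m v * G'.K (φ.vmap v) = 2 * (∑ e, w e - ∑ v, m v) := by
  simp only [Multigraph.K, mul_sub, sum_sub_distrib, hφ.mul_deg, G.sum_sum_incident, ← sum_mul]
  ring

end GraphHom

theorem deg_ramification_divisor_even_general
    {G : Multigraph V E} {G' : Multigraph V' E'} {φ : GraphHom G G'} {w : E → ℤ} {m : V → ℤ}
    (hφ : φ.IsHarmonicWith w m) :
    Even (∑ v, (G.K v - m v * G'.K (φ.vmap v))) := by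
  rw [sum_sub_distrib, G.sum_K, hφ.sum_mul_K]
  exact (even_two_mul _).sub (even_two_mul _)

end

/-- For a `w`-harmonic morphism `φ : Γ → Γ'` (both graphs having at least
one edge), the degree of the ramification divisor `R_φ = K_Γ - φ*K_{Γ'}` is even. -/
theorem deg_ramification_divisor_even
    (G : Multigraph V E) (G' : Multigraph V' E') (φ : GraphHom G G')
    (w : E → ℤ) (hw : ∀ e, 0 < w e) (m : V → ℤ)
    (hm : ∀ (v : V) (e' : E'), φ.vmap v ∈ G'.inc e' → localDeg G G' φ w v e' = m v)
    (hE : Nonempty E) (hE' : Nonempty E') :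
    Even (∑ v : V, (G.K v - m v * G'.K (φ.vmap v))) :=
  deg_ramification_divisor_even_general hm
end
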